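/- arXiv:1710.06517 — 2 statements merged into one kernel-verified Lean document; each statement's English description precedes it below -/
import Mathlib

section
/- For every natural number n, the product {n+1}_{s,t}·{n}!_{s,t}·{n}!_{s,t} divides {2n}!_{s,t} in ℤ[s,t]; that is, the (s,t)-Catalan number (1/{n+1}_{s,t})·{2n choose n}_{s,t} is a polynomial in s and t with integer coefficients. -/
open MvPolynomial

/-- The generalized Fibonacci polynomials `{m}_{s,t} ∈ ℤ[s,t]`, with `s = X 0`, `t = X 1`. -/
noncomputable def gfib : ℕ → MvPolynomial (Fin 2) ℤ
  | 0 => 0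
  | 1 => 1
  | (m + 2) => X 0 * gfib (m + 1) + X 1 * gfib m

/-- The Fibonacci factorial `{m}!_{s,t}`. -/
noncomputable def gfibFact : ℕ → MvPolynomial (Fin 2) ℤ
  | 0 => 1
  | (m + 1) => gfib (m + 1) * gfibFact m

/-!
The addition law `{m+k+1} = {m+1}{k+1} + t{m}{k}` yields a Pascal recurrence, hence the integrality
of the Fibonomial coefficients. For `n = m + 1` it also gives
`{2n} = {m+1} · ({m+2} + t{m})`, and therefore

  `{2n}! / ({n+1}! {n}!) = {2m+1 choose m} + t {2m+1 choose m-1}`.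
-/

theorem gfib_add_two (m : ℕ) : gfib (m + 2) = X 0 * gfib (m + 1) + X 1 * gfib m := rfl

theorem gfibFact_succ (m : ℕ) : gfibFact (m + 1) = gfib (m + 1) * gfibFact m := rfl

theorem gfib_add_add_one (m k : ℕ) :
    gfib (m + k + 1) = gfib (m + 1) * gfib (k + 1) + X 1 * gfib m * gfib k := by
  induction m using Nat.twoStepInduction with
  | zero => simp [gfib]
  | one => simp [add_comm 1 k, gfib]
  | more m ih ih_succ =>
    calc gfib (m + 2 + k + 1)
        = X 0 * gfib (m + 1 + k + 1) + X 1 * gfib (m + k + 1) := by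
          rw [show m + 2 + k + 1 = m + k + 1 + 2 by ring, gfib_add_two, add_right_comm m 1 k]
      _ = gfib (m + 2 + 1) * gfib (k + 1) + X 1 * gfib (m + 2) * gfib k := by
          rw [ih, ih_succ, gfib_add_two (m + 1), gfib_add_two m]
          ring

theorem gfibFact_succ_mul_dvd {m : ℕ} {p q : MvPolynomial (Fin 2) ℤ}
    (h : gfibFact m * p ∣ q) : gfibFact (m + 1) * p ∣ gfib (m + 1) * q := by
  rw [gfibFact_succ, mul_assoc]
  exact mul_dvd_mul_left _ h

theorem mul_gfibFact_succ_dvd {k : ℕ} {p q : MvPolynomial (Fin 2) ℤ}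
    (h : p * gfibFact k ∣ q) : p * gfibFact (k + 1) ∣ gfib (k + 1) * q := by
  rw [mul_comm] at h ⊢
  exact gfibFact_succ_mul_dvd h

theorem gfibFact_mul_gfibFact_dvd_gfibFact_add :
    ∀ m k : ℕ, gfibFact m * gfibFact k ∣ gfibFact (m + k)
  | 0, k => by simp [gfibFact]
  | m + 1, 0 => by simp [gfibFact]
  | m + 1, k + 1 => by
    have pascal : gfibFact (m + 1 + (k + 1)) =
        gfib (k + 2) * (gfib (m + 1) * gfibFact (m + (k + 1))) +
          X 1 * gfib m * (gfib (k + 1) * gfibFact (m + 1 + k)) := by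
      rw [add_right_comm m 1 (k + 1), gfibFact_succ, gfib_add_add_one, add_right_comm m 1 k,
        ← add_assoc m k 1]
      ring
    rw [pascal]
    exact dvd_add
      ((gfibFact_succ_mul_dvd (gfibFact_mul_gfibFact_dvd_gfibFact_add m (k + 1))).mul_left _)
      ((mul_gfibFact_succ_dvd (gfibFact_mul_gfibFact_dvd_gfibFact_add (m + 1) k)).mul_left _)

theorem gfibFact_mul_gfibFact_succ_dvd_gfib_mul (m k : ℕ) :
    gfibFact m * gfibFact (k + 1) ∣ gfib m * gfibFact (m + k) := by
  cases m with
  | zero => simp [gfib]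
  | succ m =>
    rw [add_right_comm m 1 k, add_assoc m k 1]
    exact gfibFact_succ_mul_dvd (gfibFact_mul_gfibFact_dvd_gfibFact_add m (k + 1))

/-- The `(s,t)`-Catalan number is a polynomial: for every `n`,
`{n+1}·{n}!·{n}!` divides `{2n}!` in `ℤ[s,t]`. -/
theorem st_catalan_is_polynomial (n : ℕ) :
    (gfib (n + 1) * gfibFact n * gfibFact n) ∣ gfibFact (2 * n) := by
  cases n with
  | zero => simp [gfib, gfibFact]
  | succ m =>
    have denominator : gfib (m + 2) * gfibFact (m + 1) * gfibFact (m + 1) =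
        gfib (m + 1) * (gfibFact m * gfibFact (m + 2)) := by
      rw [gfibFact_succ (m + 1), gfibFact_succ m]
      ring
    have numerator : gfibFact (2 * (m + 1)) = gfib (m + 1) *
        (gfib (m + 2) * gfibFact (m + (m + 1)) + X 1 * (gfib m * gfibFact (m + (m + 1)))) := by
      rw [show 2 * (m + 1) = m + (m + 1) + 1 by ring, gfibFact_succ, gfib_add_add_one]
      ring
    rw [denominator, numerator]
    exact mul_dvd_mul_left _ (dvd_add
      (mul_gfibFact_succ_dvd (gfibFact_mul_gfibFact_dvd_gfibFact_add m (m + 1)))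
      ((gfibFact_mul_gfibFact_succ_dvd_gfib_mul m (m + 1)).mul_left _))
end

section
/- Let n be odd, let P ∈ ℤ[s,t] be the unique polynomial with P·{n+1}_{s,t}·{n}!_{s,t}·{n}!_{s,t} = {2n}!_{s,t}, let Q ∈ ℤ[q] be the unique polynomial with Q·[n+1]_q·[n]!_q·[n]!_q = [2n]!_q (MacMahon's q-Catalan polynomial), and let ζ = exp(2πi/n) ∈ ℂ. Then for every integer ℓ, P(ζ^ℓ + ζ^{−ℓ}, −1) = Q(ζ^ℓ), and moreover P(0, 1) = Q(−1). -/
open MvPolynomial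

/-- The q-analogue `[m]_q = 1 + q + ⋯ + q^{m-1} ∈ ℤ[q]`. -/
noncomputable def qInt (m : ℕ) : Polynomial ℤ := ∑ i ∈ Finset.range m, Polynomial.X ^ i

/-- The q-factorial `[m]!_q = [m]_q [m-1]_q ⋯ [1]_q`. -/
noncomputable def qFact : ℕ → Polynomial ℤ
  | 0 => 1
  | (m + 1) => qInt (m + 1) * qFact m

/-- The primitive `n`-th root of unity `ζ = exp(2πi/n)`. -/
noncomputable def primRoot (n : ℕ) : ℂ := Complex.exp (2 * Real.pi * Complex.I / n)

/-! The substitution `s = c (1 + q)`, `t = -c² q` sends `{m+1}` to `c ^ m [m+1]_q`. When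
`c ^ n = 1` the powers of `c` cancel from the Catalan quotient, so `P(c (1 + q), -c² q) = Q(q)`.
Taking `c = 1`, `q = -1` gives `P(0, 1) = Q(-1)`, and taking `c = ω⁻¹`, `q = ω²` for `ω ^ n = 1`
gives `P(ω + ω⁻¹, -1) = Q(ω²)`.

It remains to replace `ω²` by `ω`, where `ω ↦ ω²` preserves orders because `n` is odd. If `ω` has
order `d ∣ n`, cancelling the factors `[d]_q` from the multiples of `d` in `[n]!_q` and `[2n]!_q`
shows that `Q(ω) [n+1]_ω` is the central binomial coefficient of `n / d`. As `[n+1]_ω = 1` for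
`ω ≠ 1`, the value `Q(ω)` depends only on `d`. Hence `Q(q²) ≡ Q(q)` modulo `q ^ n - 1`, which
carries the identity from `ℂ` to the `n`-th roots of unity of any commutative ring. -/

section QAnalogues

lemma qInt_mul_X_sub_one (m : ℕ) : qInt m * (Polynomial.X - 1) = Polynomial.X ^ m - 1 :=
  geom_sum_mul _ _

lemma qInt_succ (m : ℕ) : qInt (m + 1) = qInt m + Polynomial.X ^ m :=
  Finset.sum_range_succ _ _

lemma qInt_mul (d k : ℕ) : qInt (d * k) = qInt d * Polynomial.expand ℤ d (qInt k) := by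
  have expand_qInt : Polynomial.expand ℤ d (qInt k) * (Polynomial.X ^ d - 1) =
      Polynomial.X ^ (d * k) - 1 := by
    simpa [← pow_mul] using congrArg (Polynomial.expand ℤ d) (qInt_mul_X_sub_one k)
  refine mul_right_cancel₀ (Polynomial.X_sub_C_ne_zero (1 : ℤ)) ?_
  rw [map_one, qInt_mul_X_sub_one, ← expand_qInt, ← qInt_mul_X_sub_one]
  ring

lemma qInt_monic {m : ℕ} (hm : m ≠ 0) : (qInt m).Monic :=
  Polynomial.monic_geom_sum_X hm

lemma qFact_monic : ∀ m : ℕ, (qFact m).Monic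
  | 0 => Polynomial.monic_one
  | m + 1 => (qInt_monic m.succ_ne_zero).mul (qFact_monic m)

lemma qFact_add (m l : ℕ) :
    qFact (m + l) = qFact m * ∏ i ∈ Finset.range l, qInt (m + i + 1) := by
  induction l with
  | zero => simp
  | succ l ih => rw [← add_assoc, qFact, ih, Finset.prod_range_succ]; ring

/-- The cofactor of `[d]_q ^ k` in `[dk]!_q` for `0 < d`: the multiples of `d` contribute
`[k]!` in the variable `q ^ d`, and the other indices contribute their own factors `[dj+r+1]_q`. -/
noncomputable def qFactCofactor (d k : ℕ) : Polynomial ℤ :=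
  Polynomial.expand ℤ d (qFact k) *
    ∏ j ∈ Finset.range k, ∏ r ∈ Finset.range (d - 1), qInt (d * j + r + 1)

lemma qFact_mul {d : ℕ} (hd : 0 < d) (k : ℕ) :
    qFact (d * k) = qInt d ^ k * qFactCofactor d k := by
  induction k with
  | zero => simp [qFact, qFactCofactor]
  | succ k ih =>
    have last_factor : qInt (d * k + (d - 1) + 1) =
        qInt d * Polynomial.expand ℤ d (qInt (k + 1)) := by
      rw [← qInt_mul, mul_add_one, add_assoc, Nat.sub_add_cancel hd]
    have block : ∏ i ∈ Finset.range d, qInt (d * k + i + 1) =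
        (∏ r ∈ Finset.range (d - 1), qInt (d * k + r + 1)) *
          (qInt d * Polynomial.expand ℤ d (qInt (k + 1))) := by
      rw [← last_factor, ← Finset.prod_range_succ, Nat.sub_add_cancel hd]
    rw [mul_add_one, qFact_add, ih, block]
    simp only [qFactCofactor, qFact, Finset.prod_range_succ, map_mul]
    ring

end QAnalogues

section Evaluation

variable {R : Type*} [CommRing R]

lemma aeval_qInt (x : R) (m : ℕ) :
    Polynomial.aeval x (qInt m) = ∑ i ∈ Finset.range m, x ^ i := by
  simp [qInt]

lemma aeval_one_qFact (m : ℕ) : Polynomial.aeval (1 : R) (qFact m) = m.factorial := by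
  induction m with
  | zero => simp [qFact]
  | succ m ih => simp [qFact, ih, aeval_qInt, Nat.factorial_succ]

lemma aeval_qInt_add_of_pow_eq_one [IsDomain R] {x : R} (hx : x ≠ 1) {l : ℕ} (hl : x ^ l = 1)
    (m : ℕ) : Polynomial.aeval x (qInt (l + m)) = Polynomial.aeval x (qInt m) := by
  refine mul_right_cancel₀ (sub_ne_zero.2 hx) ?_
  rw [aeval_qInt, aeval_qInt, geom_sum_mul, geom_sum_mul, pow_add, hl, one_mul]

lemma aeval_qInt_ne_zero {x : R} {m : ℕ} (hm : x ^ m ≠ 1) :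
    Polynomial.aeval x (qInt m) ≠ 0 := by
  intro h
  have := geom_sum_mul x m
  rw [← aeval_qInt, h, zero_mul] at this
  exact hm (sub_eq_zero.1 this.symm)

end Evaluation

section RootsOfUnity

variable {R : Type*} [CommRing R] [IsDomain R] {d : ℕ} {ω : R}

lemma aeval_qFact_ne_zero_of_lt (hω : IsPrimitiveRoot ω d) {m : ℕ} (hm : m < d) :
    Polynomial.aeval ω (qFact m) ≠ 0 := by
  induction m with
  | zero => simp [qFact]
  | succ m ih =>
    rw [qFact, map_mul]
    exact mul_ne_zero (aeval_qInt_ne_zero (hω.pow_ne_one_of_pos_of_lt m.succ_ne_zero hm))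
      (ih (Nat.lt_of_succ_lt hm))

lemma aeval_qFactCofactor (hω : IsPrimitiveRoot ω d) (k : ℕ) :
    Polynomial.aeval ω (qFactCofactor d k) =
      k.factorial * Polynomial.aeval ω (qFact (d - 1)) ^ k := by
  have periodic (j : ℕ) : ∀ r ∈ Finset.range (d - 1),
      Polynomial.aeval ω (qInt (d * j + r + 1)) = Polynomial.aeval ω (qInt (0 + r + 1)) := by
    intro r hr
    have hd : 1 < d := by have := Finset.mem_range.1 hr; omega
    rw [add_assoc, aeval_qInt_add_of_pow_eq_one (hω.ne_one hd) (by simp [pow_mul, hω.pow_eq_one]),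
      zero_add]
  have block (j : ℕ) :
      ∏ r ∈ Finset.range (d - 1), Polynomial.aeval ω (qInt (d * j + r + 1)) =
        Polynomial.aeval ω (qFact (d - 1)) := by
    rw [Finset.prod_congr rfl (periodic j), ← map_prod, ← zero_add (d - 1), qFact_add]
    simp [qFact]
  simp only [qFactCofactor, map_mul, map_prod, Polynomial.expand_aeval, hω.pow_eq_one,
    aeval_one_qFact, block, Finset.prod_const, Finset.card_range]

lemma aeval_qCatalan_mul_aeval_qInt [CharZero R] (hω : IsPrimitiveRoot ω d) (hd : 0 < d) {k : ℕ}
    {Q : Polynomial ℤ}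
    (hQ : Q * (qInt (d * k + 1) * qFact (d * k) * qFact (d * k)) = qFact (2 * (d * k))) :
    Polynomial.aeval ω Q * Polynomial.aeval ω (qInt (d * k + 1)) = k.centralBinom := by
  have cofactor_eq : Q * qInt (d * k + 1) * qFactCofactor d k * qFactCofactor d k =
      qFactCofactor d (2 * k) := by
    refine mul_left_cancel₀ (pow_ne_zero (2 * k) (qInt_monic hd.ne').ne_zero) ?_
    rw [← qFact_mul hd, mul_left_comm d 2 k, ← hQ, qFact_mul hd k]
    ring
  set A := Polynomial.aeval ω (qFact (d - 1)) with hA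
  have hA0 : A ≠ 0 := aeval_qFact_ne_zero_of_lt hω (Nat.sub_lt hd one_pos)
  have hk : (k.factorial : R) ≠ 0 := Nat.cast_ne_zero.2 k.factorial_ne_zero
  have eval_eq := congrArg (Polynomial.aeval ω) cofactor_eq
  simp only [map_mul, aeval_qFactCofactor hω, ← hA] at eval_eq
  have centralBinom_mul :
      (k.centralBinom : R) * k.factorial * k.factorial = (2 * k).factorial := by
    rw [Nat.centralBinom, two_mul]
    exact_mod_cast Nat.add_choose_mul_factorial_mul_factorial k k
  refine mul_right_cancel₀ (mul_ne_zero (mul_ne_zero hk hk) (pow_ne_zero (2 * k) hA0)) ?_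
  linear_combination eval_eq - A ^ (2 * k) * centralBinom_mul

lemma aeval_pow_qCatalan [CharZero R] {n l : ℕ} (hn : 0 < n) (hl : l.Coprime n)
    (hω : ω ^ n = 1) {Q : Polynomial ℤ}
    (hQ : Q * (qInt (n + 1) * qFact n * qFact n) = qFact (2 * n)) :
    Polynomial.aeval (ω ^ l) Q = Polynomial.aeval ω Q := by
  rcases eq_or_ne ω 1 with rfl | hω1
  · rw [one_pow]
  obtain ⟨k, rfl⟩ := orderOf_dvd_of_pow_eq_one hω
  have hd : 0 < orderOf ω := Nat.pos_of_mul_pos_right hn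
  have eval_eq {η : R} (hη : IsPrimitiveRoot η (orderOf ω)) :
      Polynomial.aeval η Q = k.centralBinom := by
    have hη1 : η ≠ 1 := by
      rintro rfl
      exact hω1 (orderOf_eq_one_iff.1 (hη.eq_orderOf.trans orderOf_one))
    rw [← aeval_qCatalan_mul_aeval_qInt hη hd hQ,
      aeval_qInt_add_of_pow_eq_one hη1 (by rw [pow_mul, hη.pow_eq_one, one_pow]), aeval_qInt]
    simp
  have hprim := IsPrimitiveRoot.orderOf ω
  rw [eval_eq hprim, eval_eq (hprim.pow_of_coprime l hl.coprime_mul_right_right)]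

lemma X_pow_sub_one_dvd_of_aeval_eq_zero {K : Type*} [Field K] [CharZero K] {n : ℕ} (hn : 0 < n)
    {ζ : K} (hζ : IsPrimitiveRoot ζ n) {f : Polynomial ℤ}
    (hf : ∀ η : K, η ^ n = 1 → Polynomial.aeval η f = 0) :
    (Polynomial.X ^ n - 1 : Polynomial ℤ) ∣ f := by
  have monic : (Polynomial.X ^ n - 1 : Polynomial ℤ).Monic := by
    simpa using Polynomial.monic_X_pow_sub_C (1 : ℤ) hn.ne'
  rw [← Polynomial.map_dvd_map (Int.castRingHom K) Int.cast_injective monic]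
  simp only [Polynomial.map_sub, Polynomial.map_pow, Polynomial.map_X, Polynomial.map_one]
  rw [Polynomial.X_pow_sub_one_eq_prod hn hζ]
  refine Finset.prod_dvd_of_coprime
    ((Polynomial.pairwise_coprime_X_sub_C Function.injective_id).set_pairwise _) fun η hη => ?_
  change Polynomial.X - Polynomial.C η ∣ _
  rw [Polynomial.dvd_iff_isRoot, Polynomial.IsRoot, Polynomial.eval_map]
  exact hf η ((Polynomial.mem_nthRootsFinset hn 1).1 hη)

lemma X_pow_sub_one_dvd_expand_qCatalan_sub {n l : ℕ} (hn : 0 < n) (hl : l.Coprime n)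
    {Q : Polynomial ℤ} (hQ : Q * (qInt (n + 1) * qFact n * qFact n) = qFact (2 * n)) :
    (Polynomial.X ^ n - 1 : Polynomial ℤ) ∣ Polynomial.expand ℤ l Q - Q := by
  refine X_pow_sub_one_dvd_of_aeval_eq_zero hn (Complex.isPrimitiveRoot_exp n hn.ne')
    fun η hη => ?_
  rw [map_sub, Polynomial.expand_aeval, aeval_pow_qCatalan hn hl hη hQ, sub_self]

end RootsOfUnity

section Substitution

variable {R : Type*} [CommRing R]

lemma aeval_gfib_succ (c x : R) :
    ∀ m : ℕ, aeval ![c * (1 + x), -c ^ 2 * x] (gfib (m + 1)) =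
      c ^ m * Polynomial.aeval x (qInt (m + 1))
  | 0 => by simp [gfib, qInt]
  | 1 => by simp [gfib, qInt, Finset.sum_range_succ]
  | m + 2 => by
    rw [gfib, map_add, map_mul, map_mul, aeval_gfib_succ c x (m + 1), aeval_gfib_succ c x m]
    simp only [aeval_X, Matrix.cons_val_zero, Matrix.cons_val_one, qInt_succ, map_add, map_pow,
      Polynomial.aeval_X]
    ring

lemma aeval_gfibFact (c x : R) (m : ℕ) :
    aeval ![c * (1 + x), -c ^ 2 * x] (gfibFact m) =
      c ^ m.choose 2 * Polynomial.aeval x (qFact m) := by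
  induction m with
  | zero => simp [gfibFact, qFact]
  | succ m ih =>
    rw [gfibFact, qFact, map_mul, map_mul, ih, aeval_gfib_succ, Nat.choose_succ_succ' m 1,
      Nat.choose_one_right]
    ring

lemma two_mul_choose_two (n : ℕ) : (2 * n).choose 2 = 2 * n.choose 2 + n * n := by
  rw [two_mul, Nat.add_choose_eq, Finset.Nat.sum_antidiagonal_eq_sum_range_succ_mk]
  simp only [Finset.sum_range_succ, Finset.sum_range_zero, Nat.choose_zero_right,
    Nat.choose_one_right, Nat.reduceSub]
  ring

lemma aeval_stCatalan_of_isRegular {n : ℕ} {c x : R} (hc : c ^ n = 1)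
    (hx : IsRegular (Polynomial.aeval x (qInt (n + 1) * qFact n * qFact n)))
    {P : MvPolynomial (Fin 2) ℤ}
    (hP : P * (gfib (n + 1) * gfibFact n * gfibFact n) = gfibFact (2 * n))
    {Q : Polynomial ℤ} (hQ : Q * (qInt (n + 1) * qFact n * qFact n) = qFact (2 * n)) :
    aeval ![c * (1 + x), -c ^ 2 * x] P = Polynomial.aeval x Q := by
  have unit_factor : IsUnit (c ^ (2 * n.choose 2)) := by
    rcases eq_or_ne n 0 with rfl | hn
    · simp
    · exact (IsUnit.of_pow_eq_one hc hn).pow _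
  have hP' := congrArg (aeval ![c * (1 + x), -c ^ 2 * x]) hP
  have hQ' := congrArg (Polynomial.aeval x) hQ
  simp only [map_mul, aeval_gfib_succ, aeval_gfibFact, two_mul_choose_two, pow_add _ _ (n * n),
    pow_mul _ n n, hc, one_pow, mul_one, one_mul] at hP'
  refine hx.right (unit_factor.mul_left_cancel ?_)
  simp only [map_mul] at hQ' ⊢
  linear_combination hP' - c ^ (2 * n.choose 2) * hQ'

lemma aeval_stCatalan {n : ℕ} {c : R} (hc : c ^ n = 1) (x : R) {P : MvPolynomial (Fin 2) ℤ}
    (hP : P * (gfib (n + 1) * gfibFact n * gfibFact n) = gfibFact (2 * n))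
    {Q : Polynomial ℤ} (hQ : Q * (qInt (n + 1) * qFact n * qFact n) = qFact (2 * n)) :
    aeval ![c * (1 + x), -c ^ 2 * x] P = Polynomial.aeval x Q := by
  -- At the indeterminate of `R[X]` the factors `[m]` are monic, hence regular for every `R`.
  have regular : IsRegular (Polynomial.aeval (Polynomial.X : Polynomial R)
      (qInt (n + 1) * qFact n * qFact n)) := by
    rw [Polynomial.aeval_X_left_eq_map]
    exact ((((qInt_monic n.succ_ne_zero).mul (qFact_monic n)).mul (qFact_monic n)).map _).isRegular
  have generic : aeval ![Polynomial.C c * (1 + Polynomial.X), -Polynomial.C c ^ 2 * Polynomial.X] P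
      = Polynomial.aeval (Polynomial.X : Polynomial R) Q :=
    aeval_stCatalan_of_isRegular (by rw [← map_pow, hc, map_one]) regular hP hQ
  let evalAt : Polynomial R →ₐ[ℤ] R := (Polynomial.aeval x).restrictScalars ℤ
  have evalAt_X : evalAt Polynomial.X = x := Polynomial.aeval_X x
  have evalAt_C : evalAt (Polynomial.C c) = c := Polynomial.aeval_C x c
  have specialized := congrArg evalAt generic
  rw [comp_aeval_apply, ← Polynomial.aeval_algHom_apply, evalAt_X] at specialized
  rw [← specialized]
  congr 2
  funext i
  fin_cases i <;> simp [evalAt_X, evalAt_C]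

end Substitution

theorem st_catalan_eval_eq_q_catalan_eval_general {R : Type*} [CommRing R] (n : ℕ) (hn : Odd n)
    (P : MvPolynomial (Fin 2) ℤ)
    (hP : P * (gfib (n + 1) * gfibFact n * gfibFact n) = gfibFact (2 * n))
    (Q : Polynomial ℤ)
    (hQ : Q * (qInt (n + 1) * qFact n * qFact n) = qFact (2 * n)) :
    (∀ ω ∈ rootsOfUnity n R,
      aeval ![(ω : R) + (ω⁻¹ : Rˣ), -1] P = Polynomial.aeval (ω : R) Q) ∧
    aeval ![(0 : R), 1] P = Polynomial.aeval (-1 : R) Q := by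
  refine ⟨fun ω hω => ?_, by simpa using aeval_stCatalan (one_pow n) (-1 : R) hP hQ⟩
  have hω' : (ω : R) ^ n = 1 := (mem_rootsOfUnity' n ω).1 hω
  have hinv : ((ω⁻¹ : Rˣ) : R) ^ n = 1 := (mem_rootsOfUnity' n ω⁻¹).1 (inv_mem hω)
  have aeval_sq : Polynomial.aeval ((ω : R) ^ 2) Q = Polynomial.aeval (ω : R) Q := by
    obtain ⟨f, hf⟩ := X_pow_sub_one_dvd_expand_qCatalan_sub hn.pos hn.coprime_two_left hQ
    have h := congrArg (Polynomial.aeval (ω : R)) hf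
    simpa [Polynomial.expand_aeval, hω', sub_eq_zero] using h
  have hs : ((ω⁻¹ : Rˣ) : R) * (1 + (ω : R) ^ 2) = ω + (ω⁻¹ : Rˣ) := by
    linear_combination (ω : R) * ω.inv_mul
  have ht : -((ω⁻¹ : Rˣ) : R) ^ 2 * (ω : R) ^ 2 = -1 := by
    rw [neg_mul, ← mul_pow, ω.inv_mul, one_pow]
  rw [← aeval_sq, ← aeval_stCatalan hinv ((ω : R) ^ 2) hP hQ, hs, ht]

/-- For `n` odd, the `(s,t)`-Catalan polynomial `P` and MacMahon's q-Catalan polynomial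
`Q` satisfy `P(ζ^ℓ + ζ^{-ℓ}, -1) = Q(ζ^ℓ)` for all integers `ℓ`, and `P(0,1) = Q(-1)`. -/
theorem st_catalan_eval_eq_q_catalan_eval (n : ℕ) (hn : Odd n)
    (P : MvPolynomial (Fin 2) ℤ)
    (hP : P * (gfib (n + 1) * gfibFact n * gfibFact n) = gfibFact (2 * n))
    (Q : Polynomial ℤ)
    (hQ : Q * (qInt (n + 1) * qFact n * qFact n) = qFact (2 * n)) :
    (∀ ℓ : ℤ,
      aeval ![primRoot n ^ ℓ + primRoot n ^ (-ℓ), (-1 : ℂ)] P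
        = Polynomial.aeval (primRoot n ^ ℓ) Q) ∧
    aeval ![(0 : ℂ), 1] P = Polynomial.aeval (-1 : ℂ) Q := by
  obtain ⟨general, at_neg_one⟩ := st_catalan_eval_eq_q_catalan_eval_general (R := ℂ) n hn P hP Q hQ
  have : NeZero n := ⟨hn.pos.ne'⟩
  let ζ := (Complex.isPrimitiveRoot_exp n hn.pos.ne').toRootsOfUnity
  have hζ : ((ζ : ℂˣ) : ℂ) = primRoot n := rfl
  exact ⟨fun ℓ => by simpa [hζ] using general (ζ ^ ℓ : rootsOfUnity n ℂ) (ζ ^ ℓ).2, at_neg_one⟩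
end
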